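/- Let 𝓑' be the substructure of the labeled tree structure 𝒜' generated by {(1,⟨⟩)} (its underlying set is {(n,τ) : n ≥ 1}). Then 𝓑' is a Σ₁-elementary substructure of 𝒜'. -/

import Mathlib

open FirstOrder FirstOrder.Language

/-- The domain of the labeled tree structure `𝒜'`: pairs `(n,τ)` with `n ∈ ℕ` and
`τ ∈ ℤ^{<ω}` a finite sequence of integers. -/
abbrev TreeDom : Type := ℕ × List ℤ

/-- The function symbols of the languages `L₀` and `L₁`: a unary symbol `p` and a unary
symbol `c i` for each integer `i ∈ ℤ`. -/
inductive TreeFn : ℕ → Type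
  | p : TreeFn 1
  | c : ℤ → TreeFn 1

/-- The relation symbols of the language `L₁`: a single unary relation symbol `P`. -/
inductive TreeRel : ℕ → Type
  | P : TreeRel 1

/-- The language `L₁`: unary function symbols `p` and `c_i` (`i ∈ ℤ`) together with a unary
relation symbol `P`. -/
def L1 : Language := ⟨TreeFn, TreeRel⟩

/-- The parent function: `p^{𝒜'}(n,τ) = (n,τ⁻)` if `τ` is nonempty (`τ⁻` being `τ` with its
last entry removed), and `p^{𝒜'}(n,⟨⟩) = (n+1,⟨⟩)`. -/
def pInterp (x : TreeDom) : TreeDom :=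
  if x.2 = [] then (x.1 + 1, []) else (x.1, x.2.dropLast)

/-- The `i`-th child function: `c_i^{𝒜'}(n,τ) = (n, τ⌢i)`, the sequence `τ` with `i`
appended. -/
def cInterp (i : ℤ) (x : TreeDom) : TreeDom := (x.1, x.2 ++ [i])

/-- The labeled tree `L₁`-structure `𝒜'` on `TreeDom`, where `P^{𝒜'}(n,τ)` holds if and
only if `n + |τ|` is even. -/
instance treeStructure' : L1.Structure TreeDom where
  funMap {_n} f x :=
    match f with
    | TreeFn.p => pInterp (x 0)
    | TreeFn.c i => cInterp i (x 0)
  RelMap {_n} r x :=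
    match r with
    | TreeRel.P => Even ((x 0).1 + (x 0).2.length)

/-- `𝓑'`, the substructure of `𝒜'` generated by `{(1,⟨⟩)}`
(its underlying set is `{(n,τ) : n ≥ 1}`). -/
def TreeB' : L1.Substructure TreeDom :=
  Substructure.closure L1 ({((1 : ℕ), ([] : List ℤ))} : Set TreeDom)

/-- A substructure `S` of `M` is a Σ₁-elementary substructure if for every quantifier-free
formula `φ(x̄,ȳ)` and every tuple `v` of elements of `S`, if `M ⊨ ∃x̄ φ(x̄,v)` then
`S ⊨ ∃x̄ φ(x̄,v)`. -/
def Sigma1Elementary (L : Language) (M : Type*) [L.Structure M] (S : L.Substructure M) :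
    Prop :=
  ∀ (k m : ℕ) (φ : L.BoundedFormula (Fin k) m), φ.IsQF → ∀ v : Fin k → S,
    φ.exs.Realize (fun i => (v i : M)) → φ.exs.Realize v

/-!
Grafting the subtree `n = 0` of `𝒜'` below `(1, ⟨⟩)` as its `k`-th child gives a homomorphism of
`𝒜'` into `𝓑'` that fixes `𝓑'` pointwise; it respects the labels because it raises `n + |τ|` by two
on that subtree. It is not injective, since it identifies `(0, τ)` with `(1, k⌢τ)`; but two given
points are identified for only finitely many `k`, and the truth of a quantifier-free formula at a
given tuple depends on finitely many points. So, for a given tuple of witnesses in `𝒜'`, all but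
finitely many of these homomorphisms move it to witnesses in `𝓑'`.
-/

section EventualEmbedding

variable {L : Language} {M N ι : Type*} [L.Structure M] [L.Structure N]

/-- A family of homomorphisms is an eventual embedding along a filter if it eventually separates any
two given points and eventually reflects any given failure of a relation. The exceptional indices
may depend on the points, so no single member of the family need be an embedding. -/
structure IsEventualEmbedding (l : Filter ι) (f : ι → M →[L] N) : Prop where
  eventually_ne : ∀ ⦃x y : M⦄, x ≠ y → ∀ᶠ i in l, f i x ≠ f i y
  eventually_not_relMap : ∀ ⦃n : ℕ⦄ (r : L.Relations n) ⦃x : Fin n → M⦄,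
    ¬ Structure.RelMap r x → ∀ᶠ i in l, ¬ Structure.RelMap r (f i ∘ x)

namespace IsEventualEmbedding

variable {l : Filter ι} {f : ι → M →[L] N}

theorem eventually_eq_iff (hf : IsEventualEmbedding l f) (x y : M) :
    ∀ᶠ i in l, f i x = f i y ↔ x = y := by
  by_cases hxy : x = y
  · simp [hxy]
  · filter_upwards [hf.eventually_ne hxy] with i hi
    exact iff_of_false hi hxy

theorem eventually_relMap_iff (hf : IsEventualEmbedding l f) {n : ℕ} (r : L.Relations n)
    (x : Fin n → M) :
    ∀ᶠ i in l, (Structure.RelMap r fun j ↦ f i (x j)) ↔ Structure.RelMap r x := by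
  by_cases hx : Structure.RelMap r x
  · exact .of_forall fun i ↦ iff_of_true ((f i).map_rel r x hx) hx
  · filter_upwards [hf.eventually_not_relMap r hx] with i hi
    exact iff_of_false hi hx

theorem eventually_realize_iff (hf : IsEventualEmbedding l f) {α : Type*} {n : ℕ}
    {φ : L.BoundedFormula α n} (hφ : φ.IsQF) (v : α → M) (xs : Fin n → M) :
    ∀ᶠ i in l, φ.Realize (f i ∘ v) (f i ∘ xs) ↔ φ.Realize v xs := by
  induction hφ with
  | falsum => exact .of_forall fun _ ↦ Iff.rfl
  | of_isAtomic hφ =>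
    cases hφ with
    | equal t₁ t₂ =>
      simpa only [BoundedFormula.realize_bdEqual, ← Sum.comp_elim, HomClass.realize_term] using
        hf.eventually_eq_iff (t₁.realize (Sum.elim v xs)) (t₂.realize (Sum.elim v xs))
    | rel r ts =>
      simpa only [BoundedFormula.realize_rel, ← Sum.comp_elim, HomClass.realize_term] using
        hf.eventually_relMap_iff r fun j ↦ (ts j).realize (Sum.elim v xs)
  | imp _ _ ih₁ ih₂ =>
    filter_upwards [ih₁, ih₂] with i h₁ h₂
    rw [BoundedFormula.realize_imp, BoundedFormula.realize_imp, h₁, h₂]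

theorem sigma1Elementary {S : L.Substructure M} [l.NeBot] {f : ι → M →[L] S}
    (hf : IsEventualEmbedding l f) (hfix : ∀ s : S, ∀ᶠ i in l, f i s = s) :
    Sigma1Elementary L M S := by
  intro k m φ hφ v hM
  rw [BoundedFormula.realize_exs] at hM ⊢
  obtain ⟨xs, hxs⟩ := hM
  have hv : ∀ᶠ i in l, ∀ j, f i (v j) = v j := Filter.eventually_all.2 fun j ↦ hfix (v j)
  obtain ⟨i, hφi, hvi⟩ := ((hf.eventually_realize_iff hφ _ xs).and hv).exists
  have comp_eq : f i ∘ (fun j ↦ (v j : M)) = v := funext hvi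
  rw [comp_eq] at hφi
  exact ⟨f i ∘ xs, hφi.2 hxs⟩

end IsEventualEmbedding

end EventualEmbedding

theorem pInterp_mem_treeB' {x : TreeDom} (hx : x ∈ TreeB') : pInterp x ∈ TreeB' :=
  TreeB'.fun_mem (n := 1) TreeFn.p (fun _ ↦ x) fun _ ↦ hx

theorem cInterp_mem_treeB' (i : ℤ) {x : TreeDom} (hx : x ∈ TreeB') : cInterp i x ∈ TreeB' :=
  TreeB'.fun_mem (n := 1) (TreeFn.c i) (fun _ ↦ x) fun _ ↦ hx

theorem succ_nil_mem_treeB' (n : ℕ) : ((n + 1, []) : TreeDom) ∈ TreeB' := by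
  induction n with
  | zero => exact Substructure.subset_closure rfl
  | succ n ih => exact pInterp_mem_treeB' ih

theorem succ_mem_treeB' (n : ℕ) (τ : List ℤ) : ((n + 1, τ) : TreeDom) ∈ TreeB' := by
  induction τ using List.reverseRecOn with
  | nil => exact succ_nil_mem_treeB' n
  | append_singleton τ i ih => exact cInterp_mem_treeB' i ih

theorem fst_le_fst_pInterp (x : TreeDom) : x.1 ≤ (pInterp x).1 := by
  unfold pInterp
  split_ifs <;> simp

theorem one_le_fst_of_mem_treeB' {x : TreeDom} (hx : x ∈ TreeB') : 1 ≤ x.1 := by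
  refine Substructure.closure_induction hx (p := fun x ↦ 1 ≤ x.1) ?_ ?_
  · rintro _ rfl
    exact le_rfl
  · intro n f x hx
    cases f with
    | p => exact (hx 0).trans (fst_le_fst_pInterp (x 0))
    | c i => exact hx 0

/-- Moves the subtree `n = 0` of `𝒜'` to the subtree of `𝓑'` rooted at `(1, ⟨k⟩)`, and fixes all
other points. -/
def graft (k : ℤ) : TreeDom → TreeDom
  | (0, τ) => (1, k :: τ)
  | (n + 1, τ) => (n + 1, τ)

theorem graft_mem_treeB' (k : ℤ) (x : TreeDom) : graft k x ∈ TreeB' := by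
  rcases x with ⟨_ | n, τ⟩
  exacts [succ_mem_treeB' 0 (k :: τ), succ_mem_treeB' n τ]

theorem graft_eq_self (k : ℤ) {x : TreeDom} (hx : 1 ≤ x.1) : graft k x = x := by
  rcases x with ⟨_ | n, τ⟩
  exacts [absurd hx (Nat.not_succ_le_zero 0), rfl]

theorem graft_pInterp (k : ℤ) (x : TreeDom) : graft k (pInterp x) = pInterp (graft k x) := by
  rcases x with ⟨_ | n, _ | ⟨i, τ⟩⟩ <;> simp [pInterp, graft]

theorem graft_cInterp (k i : ℤ) (x : TreeDom) :
    graft k (cInterp i x) = cInterp i (graft k x) := by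
  rcases x with ⟨_ | n, τ⟩ <;> rfl

theorem even_graft_iff (k : ℤ) (x : TreeDom) :
    Even ((graft k x).1 + (graft k x).2.length) ↔ Even (x.1 + x.2.length) := by
  rcases x with ⟨_ | n, τ⟩
  · have length_add_two : 1 + (k :: τ).length = 0 + τ.length + 2 := by
      rw [List.length_cons]
      omega
    simp only [graft, length_add_two, Nat.even_add, even_two, iff_true]
  · rfl

theorem graft_injOn (k : ℤ) : Set.InjOn (graft k) {x | k ∉ x.2} := by
  have mem_of_graft_zero_eq {σ τ : List ℤ} {n : ℕ} (h : graft k (0, σ) = graft k (n + 1, τ)) :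
      k ∈ τ := by
    have hτ : k :: σ = τ := congrArg Prod.snd h
    exact hτ ▸ List.mem_cons_self
  rintro ⟨_ | m, σ⟩ hσ ⟨_ | n, τ⟩ hτ h
  · have hστ : k :: σ = k :: τ := congrArg Prod.snd h
    rw [List.tail_eq_of_cons_eq hστ]
  · exact absurd (mem_of_graft_zero_eq h) hτ
  · exact absurd (mem_of_graft_zero_eq h.symm) hσ
  · exact h

/-- `graft k` as a homomorphism of `𝒜'` into `𝓑'`. -/
def graftHom (k : ℤ) : TreeDom →[L1] TreeB' where
  toFun x := ⟨graft k x, graft_mem_treeB' k x⟩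
  map_fun' f x := by
    apply Subtype.ext
    cases f with
    | p => exact graft_pInterp k (x 0)
    | c i => exact graft_cInterp k i (x 0)
  map_rel' r x hx := by
    cases r with
    | P => exact (even_graft_iff k (x 0)).2 hx

theorem graftHom_apply_coe (k : ℤ) (x : TreeB') : graftHom k x = x :=
  Subtype.ext (graft_eq_self k (one_le_fst_of_mem_treeB' x.2))

theorem isEventualEmbedding_graftHom : IsEventualEmbedding Filter.cofinite graftHom where
  eventually_ne x y hxy := by
    filter_upwards [x.2.finite_toSet.eventually_cofinite_notMem,
      y.2.finite_toSet.eventually_cofinite_notMem] with k hkx hky h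
    exact hxy (graft_injOn k hkx hky (congrArg Subtype.val h))
  eventually_not_relMap _ r x hx := by
    cases r with
    | P => exact .of_forall fun k ↦ mt (even_graft_iff k (x 0)).1 hx

/-- `𝓑'` is a Σ₁-elementary substructure of `𝒜'`. -/
theorem stmt_14 : Sigma1Elementary L1 TreeDom TreeB' :=
  isEventualEmbedding_graftHom.sigma1Elementary fun x ↦ .of_forall fun k ↦ graftHom_apply_coe k x
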